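/- arXiv:2407.10708 — 2 statements merged into one kernel-verified Lean document; each statement's English description precedes it below -/
import Mathlib

section
/- For all integers d ≥ 2, q with 1 ≤ q ≤ d-1, γ with 0 ≤ γ ≤ q-1, and all reals K < 0 and u > 0, one has P(d,q,γ,K,u) < 1. (Equivalently, in the hyperbolic space of curvature K < 0 the random flats E and L fail to intersect with strictly positive probability.) -/
open Real MeasureTheory Filter Asymptotics

/-- Surface area `ω_n = 2 π^{n/2} / Γ(n/2)` of the Euclidean unit sphere in `ℝ^n`. -/
noncomputable def omegaS (n : ℕ) : ℝ := 2 * Real.pi ^ ((n : ℝ) / 2) / Real.Gamma ((n : ℝ) / 2)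

/-- The constant `D(d,q,γ)`. -/
noncomputable def Dconst (d q γ : ℕ) : ℝ :=
  omegaS (γ + 1) * omegaS (q - γ) * omegaS (d - q) / (omegaS (d - q + γ + 1) * omegaS (d - γ))

/-- `R_K(x)`, the Euclidean (Beltrami–Klein) radius of a hyperbolic ball of radius `x`. -/
noncomputable def RK (K x : ℝ) : ℝ :=
  Real.sinh (Real.sqrt (-K) * x) /
    (Real.sqrt (-K) * Real.sqrt (1 + Real.sinh (Real.sqrt (-K) * x) ^ 2))

/-- `C_K(d,m,u)`, the invariant measure of the `m`-flats meeting the ball of radius `u`. -/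
noncomputable def Cconst (K : ℝ) (d m : ℕ) (u : ℝ) : ℝ :=
  omegaS (d - m) * Real.sqrt (-K) ^ (-(d : ℝ) + (m : ℝ) + 1) *
    ∫ r in (0:ℝ)..u,
      Real.cosh (Real.sqrt (-K) * r) ^ m * Real.sinh (Real.sqrt (-K) * r) ^ (d - m - 1)

/-- `P(d,q,γ,K,u)`, the hyperbolic intersection probability of the random flats `E` and `L`. -/
noncomputable def Pprob (d q γ : ℕ) (K u : ℝ) : ℝ :=
  Dconst d q γ * omegaS (d - γ) / Cconst K d (d - q + γ) u *
    ∫ r in (0:ℝ)..(1 / Real.sqrt (-K)),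
      r ^ ((q : ℝ) - (γ : ℝ) - 1) *
        ∫ z in (0:ℝ)..(min 1 (RK K u / r)),
          z ^ q * (1 - z ^ 2) ^ (((d : ℝ) - (q : ℝ)) / 2 - 1) *
            (1 + K * r ^ 2 * z ^ 2) ^ (-((d : ℝ) + 1) / 2)

/-- `F_{K,u}(δ)`, the distribution function of the distance of `E ∩ L` to the origin. -/
noncomputable def Fdist (d q γ : ℕ) (K u δ : ℝ) : ℝ :=
  Dconst d q γ * omegaS (d - γ) / Cconst K d (d - q + γ) u *
    ∫ r in (0:ℝ)..(RK K δ),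
      r ^ ((q : ℝ) - (γ : ℝ) - 1) *
        ∫ z in (0:ℝ)..(min 1 (RK K u / r)),
          z ^ q * (1 - z ^ 2) ^ (((d : ℝ) - (q : ℝ)) / 2 - 1) *
            (1 + K * r ^ 2 * z ^ 2) ^ (-((d : ℝ) + 1) / 2)

/-- `f_{d,q,γ,K}(δ)`, the density of the distance of `E ∩ L` to the origin. -/
noncomputable def fdens (d q γ : ℕ) (K u δ : ℝ) : ℝ :=
  Dconst d q γ * omegaS (d - γ) / Cconst K d (d - q + γ) u *
    (RK K δ ^ ((q : ℝ) - (γ : ℝ) - 1) / Real.cosh (Real.sqrt (-K) * δ) ^ 2) *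
    ∫ z in (0:ℝ)..(min 1 (RK K u / RK K δ)),
      z ^ q * (1 - z ^ 2) ^ (((d : ℝ) - (q : ℝ)) / 2 - 1) *
        (1 + K * RK K δ ^ 2 * z ^ 2) ^ (-((d : ℝ) + 1) / 2)

/-- The limiting constant `ρ(u,q,γ,κ)` in the critical phase. -/
noncomputable def rhoConst (u : ℝ) (q γ : ℕ) (κ : ℝ) : ℝ :=
  omegaS (γ + 1) * (2 * Real.pi) ^ (-((γ : ℝ) + 1) / 2) * u ^ (q + 1) *
    κ ^ (((γ : ℝ) + 1) / 2) *
    (∫ s in (0:ℝ)..u, Real.exp (κ * s ^ 2 / 2) * s ^ ((q : ℝ) - (γ : ℝ) - 1))⁻¹ *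
    ∫ r in (0:ℝ)..1,
      r ^ ((q : ℝ) - (γ : ℝ) - 1) *
        ∫ v in (0:ℝ)..(1 / r),
          v ^ q * Real.exp (-(1 / 2) * u ^ 2 * κ * v ^ 2 * (1 - r ^ 2))


lemma aux_beta_integrable {α β : ℝ} (hα : 0 < α) (hβ : 0 < β) :
    Integrable (ProbabilityTheory.betaPDFReal α β) ∧
      ∫ x, ProbabilityTheory.betaPDFReal α β x = 1 := by
  have h0 : ∀ x, 0 ≤ ProbabilityTheory.betaPDFReal α β x := by
    intro x
    by_cases h : 0 < x ∧ x < 1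
    · exact (ProbabilityTheory.betaPDFReal_pos h.1 h.2 hα hβ).le
    · simp [ProbabilityTheory.betaPDFReal, h]
  have h1 := ProbabilityTheory.lintegral_betaPDF_eq_one hα hβ
  unfold ProbabilityTheory.betaPDF at h1
  have hm := (ProbabilityTheory.measurable_betaPDFReal α β).aestronglyMeasurable (μ := volume)
  constructor
  · rw [← lintegral_ofReal_ne_top_iff_integrable hm (Eventually.of_forall h0), h1]
    simp
  · rw [integral_eq_lintegral_of_nonneg_ae (Eventually.of_forall h0) hm, h1]
    simp

lemma aux_weight (γ p : ℕ) :
    IntegrableOn (fun z : ℝ => z ^ γ * (1 - z ^ 2) ^ (((p : ℝ) + 1) / 2 - 1)) (Set.Ioo 0 1) ∧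
      ∫ z in Set.Ioo (0:ℝ) 1, z ^ γ * (1 - z ^ 2) ^ (((p : ℝ) + 1) / 2 - 1) =
        ProbabilityTheory.beta (((γ : ℝ) + 1) / 2) (((p : ℝ) + 1) / 2) / 2 := by
  have hα : 0 < ((γ : ℝ) + 1) / 2 := by positivity
  have hβ : 0 < ((p : ℝ) + 1) / 2 := by positivity
  have hB := ProbabilityTheory.beta_pos hα hβ
  obtain ⟨hi, he⟩ := aux_beta_integrable hα hβ
  have hi2 := (integrableOn_Ioi_comp_rpow_iff _ (two_ne_zero)).2 hi.integrableOn
  have he2 := integral_comp_rpow_Ioi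
    (ProbabilityTheory.betaPDFReal (((γ : ℝ) + 1) / 2) (((p : ℝ) + 1) / 2)) (two_ne_zero)
  have he3 : ∫ y in Set.Ioi (0:ℝ),
      ProbabilityTheory.betaPDFReal (((γ : ℝ) + 1) / 2) (((p : ℝ) + 1) / 2) y = 1 := by
    refine Eq.trans ?_ he
    apply setIntegral_eq_integral_of_forall_compl_eq_zero
    intro x hx
    simp only [ProbabilityTheory.betaPDFReal]
    rw [if_neg]
    intro h; exact hx h.1
  rw [he3] at he2
  set B := ProbabilityTheory.beta (((γ : ℝ) + 1) / 2) (((p : ℝ) + 1) / 2) with hBdef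
  have key : ∀ x ∈ Set.Ioi (0:ℝ), (|(2:ℝ)| * x ^ ((2:ℝ) - 1)) •
      ProbabilityTheory.betaPDFReal (((γ : ℝ) + 1) / 2) (((p : ℝ) + 1) / 2) (x ^ (2:ℝ)) =
      (Set.Ioo (0:ℝ) 1).indicator
        (fun z : ℝ => (2 / B) * (z ^ γ * (1 - z ^ 2) ^ (((p : ℝ) + 1) / 2 - 1))) x := by
    intro x hx
    have hx : 0 < x := hx
    rw [Real.rpow_two]
    by_cases h1 : x < 1
    · rw [Set.indicator_of_mem (show x ∈ Set.Ioo (0:ℝ) 1 from ⟨hx, h1⟩)]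
      simp only [ProbabilityTheory.betaPDFReal]
      rw [if_pos ⟨by positivity, by nlinarith⟩, ← hBdef]
      have e : x * (x ^ 2) ^ (((γ : ℝ) + 1) / 2 - 1) = x ^ γ := by
        rw [← Real.rpow_natCast x 2, ← Real.rpow_mul hx.le, ← Real.rpow_natCast x γ]
        nth_rewrite 1 [← Real.rpow_one x]
        rw [← Real.rpow_add hx]
        congr 1
        push_cast; ring
      rw [← e]
      rw [show (2:ℝ) - 1 = 1 by norm_num, Real.rpow_one, abs_of_pos two_pos, smul_eq_mul]
      ring
    · rw [Set.indicator_of_notMem (fun h => h1 h.2)]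
      simp only [ProbabilityTheory.betaPDFReal]
      rw [if_neg, smul_zero]
      rintro ⟨_, h⟩
      nlinarith
  have hsub : Set.Ioo (0:ℝ) 1 ∩ Set.Ioi 0 = Set.Ioo 0 1 := by
    ext x; simp; tauto
  have hi4 := hi2.congr_fun key measurableSet_Ioi
  rw [IntegrableOn, integrable_indicator_iff measurableSet_Ioo, IntegrableOn,
    Measure.restrict_restrict measurableSet_Ioo, hsub] at hi4
  rw [setIntegral_congr_fun measurableSet_Ioi key, integral_indicator measurableSet_Ioo,
    Measure.restrict_restrict measurableSet_Ioo, hsub, integral_const_mul] at he2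
  constructor
  · have := hi4.const_mul (B / 2)
    refine this.congr (Eventually.of_forall fun x => ?_)
    simp only
    field_simp
  · field_simp at he2 ⊢
    linarith

lemma aux_inner (n γ : ℕ) (b c k T X z : ℝ) (hk : 0 < k) (hT : k * T < 1)
    (hX : 0 ≤ X) (hXT : X ≤ T) (hz : 0 < z) (hz1 : z < 1) :
    ∫⁻ r in Set.Ioc (0:ℝ) (X / z),
      ‖r ^ n * (z ^ (γ + 1 + n) * (1 - z ^ 2) ^ b * (1 - k ^ 2 * r ^ 2 * z ^ 2) ^ c)‖ₑ =
    ENNReal.ofReal ((z ^ γ * (1 - z ^ 2) ^ b) *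
      ∫ s in (0:ℝ)..X, s ^ n * (1 - k ^ 2 * s ^ 2) ^ c) := by
  have hXz : 0 ≤ X / z := by positivity
  have hpos : ∀ r ∈ Set.Icc (0:ℝ) (X / z), 0 < 1 - k ^ 2 * r ^ 2 * z ^ 2 := by
    rintro r ⟨h0, h1⟩
    have h2 : r * z ≤ T := ((le_div_iff₀ hz).1 h1).trans hXT
    have h3 : k * (r * z) < 1 := (mul_le_mul_of_nonneg_left h2 hk.le).trans_lt hT
    have h4 : 0 ≤ k * (r * z) := by positivity
    nlinarith
  have hz2 : 0 < 1 - z ^ 2 := by nlinarith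
  have hnn : ∀ r ∈ Set.Ioc (0:ℝ) (X / z),
      0 ≤ r ^ n * (z ^ (γ + 1 + n) * (1 - z ^ 2) ^ b * (1 - k ^ 2 * r ^ 2 * z ^ 2) ^ c) := by
    intro r hr
    have := hpos r ⟨hr.1.le, hr.2⟩
    have := hr.1
    positivity
  have hcont : ContinuousOn (fun r : ℝ => r ^ n * (z ^ (γ + 1 + n) * (1 - z ^ 2) ^ b *
      (1 - k ^ 2 * r ^ 2 * z ^ 2) ^ c)) (Set.Icc 0 (X / z)) := by
    refine ContinuousOn.mul (by fun_prop) (ContinuousOn.mul (by fun_prop) ?_)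
    refine ContinuousOn.rpow_const (by fun_prop) ?_
    intro r hr
    exact Or.inl (hpos r hr).ne'
  have hint := (hcont.integrableOn_Icc (μ := volume)).mono_set Set.Ioc_subset_Icc_self
  rw [setLIntegral_congr_fun (g := fun r => ENNReal.ofReal (r ^ n * (z ^ (γ + 1 + n) *
    (1 - z ^ 2) ^ b * (1 - k ^ 2 * r ^ 2 * z ^ 2) ^ c))) measurableSet_Ioc
    (fun r hr => Real.enorm_of_nonneg (hnn r hr))]
  rw [← ofReal_integral_eq_lintegral_ofReal hint
    ((ae_restrict_mem measurableSet_Ioc).mono hnn)]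
  congr 1
  rw [← intervalIntegral.integral_of_le hXz]
  have h := intervalIntegral.integral_comp_mul_right (a := 0) (b := X / z)
    (fun s : ℝ => s ^ n * (1 - k ^ 2 * s ^ 2) ^ c) hz.ne'
  rw [zero_mul, div_mul_cancel₀ _ hz.ne', smul_eq_mul, inv_mul_eq_div, eq_div_iff hz.ne'] at h
  rw [← h, mul_comm (∫ x in (0:ℝ)..(X / z), _) z, ← mul_assoc,
    ← intervalIntegral.integral_const_mul]
  congr 1
  funext r
  simp only [mul_pow, pow_add]
  ring_nf

lemma aux_core (n γ p : ℕ) (c k T : ℝ) (hk : 0 < k) (hT0 : 0 < T) (hT : k * T < 1) :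
    ∫ r in (0:ℝ)..(1 / k), r ^ n * ∫ z in (0:ℝ)..(min 1 (T / r)),
      z ^ (γ + 1 + n) * (1 - z ^ 2) ^ (((p : ℝ) + 1) / 2 - 1) * (1 - k ^ 2 * r ^ 2 * z ^ 2) ^ c
    < ProbabilityTheory.beta (((γ : ℝ) + 1) / 2) (((p : ℝ) + 1) / 2) / 2 *
      ∫ s in (0:ℝ)..T, s ^ n * (1 - k ^ 2 * s ^ 2) ^ c := by
  obtain ⟨hwi, hwe⟩ := aux_weight γ p
  set b := ((p : ℝ) + 1) / 2 - 1 with hb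
  set G : ℝ → ℝ := fun X => ∫ s in (0:ℝ)..X, s ^ n * (1 - k ^ 2 * s ^ 2) ^ c with hG
  have hpos : ∀ s ∈ Set.Icc (0:ℝ) T, 0 < 1 - k ^ 2 * s ^ 2 := by
    rintro s ⟨h0, h1⟩
    have h3 : k * s < 1 := (mul_le_mul_of_nonneg_left h1 hk.le).trans_lt hT
    have h4 : 0 ≤ k * s := by positivity
    nlinarith
  have hcont : ContinuousOn (fun s : ℝ => s ^ n * (1 - k ^ 2 * s ^ 2) ^ c) (Set.Icc 0 T) := by
    refine ContinuousOn.mul (by fun_prop) ?_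
    refine ContinuousOn.rpow_const (by fun_prop) ?_
    intro r hr
    exact Or.inl (hpos r hr).ne'
  have hii : ∀ x y, 0 ≤ x → x ≤ y → y ≤ T → IntervalIntegrable
      (fun s : ℝ => s ^ n * (1 - k ^ 2 * s ^ 2) ^ c) volume x y := fun x y hx hxy hy =>
    (hcont.mono (Set.Icc_subset_Icc hx hy)).intervalIntegrable_of_Icc hxy
  have hGpos : 0 < G (T / 2) := by
    apply intervalIntegral.intervalIntegral_pos_of_pos_on
      (hii _ _ le_rfl (by linarith) (by linarith)) _ (by linarith)
    intro s hs
    have := hpos s ⟨hs.1.le, by linarith [hs.2]⟩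
    have := hs.1
    positivity
  have hGlt : G (T / 2) < G T := by
    have h1 : 0 < ∫ s in (T/2)..T, s ^ n * (1 - k ^ 2 * s ^ 2) ^ c := by
      apply intervalIntegral.intervalIntegral_pos_of_pos_on
        (hii _ _ (by linarith) (by linarith) (by linarith)) _ (by linarith)
      intro s hs
      have : 0 < s := by linarith [hs.1]
      have := hpos s ⟨this.le, hs.2.le⟩
      positivity
    have h2 := intervalIntegral.integral_add_adjacent_intervals
      (hii 0 (T/2) le_rfl (by linarith) (by linarith))
      (hii (T/2) T (by linarith) (by linarith) (by linarith))
    simp only [hG]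
    linarith
  set w : ℝ → ℝ := fun z => z ^ γ * (1 - z ^ 2) ^ b with hw
  have hwpos : ∀ z ∈ Set.Ioo (0:ℝ) 1, 0 < w z := by
    rintro z ⟨h0, h1⟩
    have : 0 < 1 - z ^ 2 := by nlinarith
    simp only [hw]
    positivity
  set z0 := k * T / 2 with hz0
  have hz0pos : 0 < z0 := by positivity
  have hz01 : z0 < 1 := by rw [hz0]; linarith
  set H : ℝ → ℝ := fun z => G T * w z - (Set.Ioo 0 z0).indicator (fun z => (G T - G (T/2)) * w z) z
    with hH
  have hsub : Set.Ioo 0 z0 ⊆ Set.Ioo (0:ℝ) 1 := Set.Ioo_subset_Ioo_right hz01.le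
  have hi2 : IntegrableOn ((Set.Ioo 0 z0).indicator (fun z => (G T - G (T/2)) * w z))
      (Set.Ioo 0 1) := (hwi.const_mul _).indicator measurableSet_Ioo
  have hHi : IntegrableOn H (Set.Ioo 0 1) := (hwi.const_mul (G T)).sub hi2
  have hHlt : ∫ z in Set.Ioo (0:ℝ) 1, H z < G T * ∫ z in Set.Ioo (0:ℝ) 1, w z := by
    simp only [hH]
    rw [integral_sub (hwi.const_mul (G T)) hi2, integral_const_mul,
      integral_indicator measurableSet_Ioo, Measure.restrict_restrict measurableSet_Ioo,
      Set.inter_eq_left.2 hsub, integral_const_mul]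
    have : 0 < ∫ z in Set.Ioo 0 z0, w z := by
      rw [← integral_Ioc_eq_integral_Ioo, ← intervalIntegral.integral_of_le hz0pos.le]
      apply intervalIntegral.intervalIntegral_pos_of_pos_on _ _ hz0pos
      · rw [intervalIntegrable_iff_integrableOn_Ioo_of_le hz0pos.le]
        exact hwi.mono_set hsub
      · exact fun z hz => hwpos z (hsub hz)
    have := mul_pos (sub_pos.2 hGlt) this
    linarith
  have hHnn : ∀ z ∈ Set.Ioo (0:ℝ) 1, 0 ≤ H z := by
    intro z hz
    have := hwpos z hz
    simp only [hH]
    by_cases h : z ∈ Set.Ioo 0 z0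
    · rw [Set.indicator_of_mem h]; nlinarith
    · rw [Set.indicator_of_notMem h]; nlinarith
  set F : ℝ → ℝ → ℝ := fun r z => r ^ n * (z ^ (γ + 1 + n) * (1 - z ^ 2) ^ b *
    (1 - k ^ 2 * r ^ 2 * z ^ 2) ^ c) with hF
  set S : Set (ℝ × ℝ) := {x | x.1 * x.2 ≤ T} with hS
  have hSm : MeasurableSet S := measurableSet_le (by fun_prop) (by fun_prop)
  have hFm : Measurable (fun x : ℝ × ℝ => ‖F x.1 x.2‖ₑ) := by
    simp only [hF]; fun_prop
  set Fi : ℝ → ℝ → ENNReal := fun r z => S.indicator (fun x => ‖F x.1 x.2‖ₑ) (r, z) with hFi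
  have hFim : Measurable (Function.uncurry Fi) := hFm.indicator hSm
  have step1 : ‖∫ r in (0:ℝ)..(1 / k), r ^ n * ∫ z in (0:ℝ)..(min 1 (T / r)),
      z ^ (γ + 1 + n) * (1 - z ^ 2) ^ b * (1 - k ^ 2 * r ^ 2 * z ^ 2) ^ c‖ₑ ≤
      ∫⁻ r in Set.Ioc (0:ℝ) (1 / k), ∫⁻ z in Set.Ioo (0:ℝ) 1, Fi r z := by
    rw [intervalIntegral.integral_of_le (by positivity)]
    refine (enorm_integral_le_lintegral_enorm _).trans ?_
    refine setLIntegral_mono' measurableSet_Ioc ?_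
    intro r hr
    have hr0 := hr.1
    rw [← intervalIntegral.integral_const_mul, intervalIntegral.integral_of_le (by positivity)]
    refine (enorm_integral_le_lintegral_enorm _).trans ?_
    rw [restrict_Ioo_eq_restrict_Ioc, ← lintegral_indicator measurableSet_Ioc,
      ← lintegral_indicator measurableSet_Ioc]
    refine lintegral_mono fun z => ?_
    by_cases hz : z ∈ Set.Ioc 0 (min 1 (T / r))
    · have h2 : z ∈ Set.Ioc (0:ℝ) 1 := ⟨hz.1, hz.2.trans (min_le_left _ _)⟩
      have h3 : (r, z) ∈ S := by
        have := (le_div_iff₀ hr0).1 (hz.2.trans (min_le_right _ _))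
        simp only [hS, Set.mem_ofPred_eq]; linarith
      rw [Set.indicator_of_mem hz, Set.indicator_of_mem h2]
      simp only [hFi]
      rw [Set.indicator_of_mem h3]
    · rw [Set.indicator_of_notMem hz]; exact zero_le
  have step2 : ∀ z ∈ Set.Ioo (0:ℝ) 1, ∫⁻ r in Set.Ioc (0:ℝ) (1 / k), Fi r z ≤
      ENNReal.ofReal (H z) := by
    intro z hz
    have hbd : ∀ X, 0 ≤ X → X ≤ T →
        (∀ r, 0 < r → r ≤ 1 / k → r * z ≤ T → r * z ≤ X) →
        ∫⁻ r in Set.Ioc (0:ℝ) (1 / k), Fi r z ≤ ENNReal.ofReal (w z * G X) := by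
      intro X hX0 hXT hX
      rw [← aux_inner n γ b c k T X z hk hT hX0 hXT hz.1 hz.2,
        ← lintegral_indicator measurableSet_Ioc, ← lintegral_indicator measurableSet_Ioc]
      refine lintegral_mono fun r => ?_
      by_cases hr : r ∈ Set.Ioc 0 (1 / k)
      · rw [Set.indicator_of_mem hr]
        by_cases h3 : (r, z) ∈ S
        · simp only [hFi]
          have h4 : r ∈ Set.Ioc 0 (X / z) :=
            ⟨hr.1, (le_div_iff₀ hz.1).2 (hX r hr.1 hr.2 h3)⟩
          rw [Set.indicator_of_mem h3, Set.indicator_of_mem h4]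
        · simp only [hFi]
          rw [Set.indicator_of_notMem h3]; exact zero_le
      · rw [Set.indicator_of_notMem hr]; exact zero_le
    by_cases h : z ∈ Set.Ioo 0 z0
    · have e : H z = w z * G (T / 2) := by
        simp only [hH]; rw [Set.indicator_of_mem h]; ring
      rw [e]
      apply hbd _ (by linarith) (by linarith)
      intro r hr0 hr1 _
      have h5 : r * k ≤ 1 := (le_div_iff₀ hk).1 hr1
      have h6 : z ≤ k * T / 2 := h.2.le
      calc r * z ≤ r * (k * T / 2) := by gcongr
        _ = (r * k) * (T / 2) := by ring
        _ ≤ 1 * (T / 2) := by gcongr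
        _ = T / 2 := one_mul _
    · have e : H z = w z * G T := by
        simp only [hH]; rw [Set.indicator_of_notMem h]; ring
      rw [e]
      exact hbd _ hT0.le le_rfl (fun r _ _ h => h)
  have step3 : ‖∫ r in (0:ℝ)..(1 / k), r ^ n * ∫ z in (0:ℝ)..(min 1 (T / r)),
      z ^ (γ + 1 + n) * (1 - z ^ 2) ^ b * (1 - k ^ 2 * r ^ 2 * z ^ 2) ^ c‖ₑ ≤
      ENNReal.ofReal (∫ z in Set.Ioo (0:ℝ) 1, H z) := by
    refine step1.trans ?_
    rw [lintegral_lintegral_swap hFim.aemeasurable, ofReal_integral_eq_lintegral_ofReal hHi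
      ((ae_restrict_mem measurableSet_Ioo).mono hHnn)]
    exact setLIntegral_mono' measurableSet_Ioo step2
  have hH0 : 0 ≤ ∫ z in Set.Ioo (0:ℝ) 1, H z := setIntegral_nonneg measurableSet_Ioo hHnn
  rw [← ofReal_norm, ENNReal.ofReal_le_ofReal_iff hH0] at step3
  rw [hwe] at hHlt
  calc _ ≤ _ := le_abs_self _
    _ ≤ _ := step3
    _ < _ := hHlt
    _ = _ := mul_comm _ _

lemma aux_RK (K x : ℝ) : RK K x =
    Real.sinh (Real.sqrt (-K) * x) / (Real.sqrt (-K) * Real.cosh (Real.sqrt (-K) * x)) := by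
  unfold RK
  rw [add_comm, ← Real.cosh_sq, Real.sqrt_sq (Real.cosh_pos _).le]

lemma aux_G (n m : ℕ) (k u : ℝ) (hk : 0 < k) :
    ∫ s in (0:ℝ)..(Real.sinh (k * u) / (k * Real.cosh (k * u))),
      s ^ n * (1 - k ^ 2 * s ^ 2) ^ (-((m : ℝ) + n + 2) / 2) =
    (k ^ n)⁻¹ * ∫ r in (0:ℝ)..u, Real.cosh (k * r) ^ m * Real.sinh (k * r) ^ n := by
  have hc : ∀ x, 0 < Real.cosh x := Real.cosh_pos
  have e1 : ∀ x, 1 - k ^ 2 * (Real.sinh (k * x) / (k * Real.cosh (k * x))) ^ 2 =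
      (Real.cosh (k * x) ^ 2)⁻¹ := by
    intro x
    have h1 := (hc (k * x)).ne'
    have h2 := Real.cosh_sq (k * x)
    field_simp
    linarith
  have h := intervalIntegral.integral_comp_mul_deriv' (a := 0) (b := u)
    (f := fun x => Real.sinh (k * x) / (k * Real.cosh (k * x)))
    (f' := fun x => (Real.cosh (k * x) ^ 2)⁻¹)
    (g := fun s : ℝ => s ^ n * (1 - k ^ 2 * s ^ 2) ^ (-((m : ℝ) + n + 2) / 2))
    (by
      intro x _
      have hkx : HasDerivAt (fun x : ℝ => k * x) k x := by
        simpa using (hasDerivAt_id x).const_mul k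
      have h1 := (hc (k * x)).ne'
      have h2 := Real.cosh_sq (k * x)
      have := hkx.sinh.div (hkx.cosh.const_mul k) (mul_ne_zero hk.ne' h1)
      refine this.congr_deriv ?_
      field_simp
      linarith)
    (by
      refine Continuous.continuousOn (Continuous.inv₀ (by fun_prop) ?_)
      intro x; have := hc (k * x); positivity)
    (by
      refine ContinuousOn.mul (by fun_prop) (ContinuousOn.rpow_const (by fun_prop) ?_)
      rintro _ ⟨x, _, rfl⟩
      left
      simp only
      rw [e1]
      have := hc (k * x); positivity)
  simp only [mul_zero, Real.sinh_zero, zero_div] at h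
  rw [← h, ← intervalIntegral.integral_const_mul]
  congr 1
  funext x
  simp only [Function.comp]
  rw [e1]
  have h1 := hc (k * x)
  have e2 : ((Real.cosh (k * x) ^ 2)⁻¹ : ℝ) ^ (-((m : ℝ) + n + 2) / 2) =
      Real.cosh (k * x) ^ (m + n + 2) := by
    rw [← Real.rpow_natCast _ 2, ← Real.rpow_neg h1.le, ← Real.rpow_mul h1.le,
      ← Real.rpow_natCast]
    congr 1
    push_cast; ring
  rw [e2, div_pow, mul_pow, pow_add, pow_add]
  field_simp

lemma aux_omega (γ p : ℕ) :
    omegaS (γ + 1) * omegaS (p + 1) / omegaS (p + 1 + γ + 1) *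
      (ProbabilityTheory.beta (((γ : ℝ) + 1) / 2) (((p : ℝ) + 1) / 2) / 2) = 1 := by
  have h1 : 0 < Real.Gamma (((γ : ℝ) + 1) / 2) := Real.Gamma_pos_of_pos (by positivity)
  have h2 : 0 < Real.Gamma (((p : ℝ) + 1) / 2) := Real.Gamma_pos_of_pos (by positivity)
  have h3 : 0 < Real.Gamma (((γ : ℝ) + 1) / 2 + ((p : ℝ) + 1) / 2) :=
    Real.Gamma_pos_of_pos (by positivity)
  have e : ((p + 1 + γ + 1 : ℕ) : ℝ) / 2 = ((γ : ℝ) + 1) / 2 + ((p : ℝ) + 1) / 2 := by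
    push_cast; ring
  unfold omegaS ProbabilityTheory.beta
  rw [e, Real.rpow_add Real.pi_pos]
  push_cast
  have := Real.rpow_pos_of_pos Real.pi_pos (((γ : ℝ) + 1) / 2)
  have := Real.rpow_pos_of_pos Real.pi_pos (((p : ℝ) + 1) / 2)
  field_simp

lemma aux_omega_pos (n : ℕ) : 0 < omegaS (n + 1) := by
  unfold omegaS
  have h1 : 0 < Real.Gamma (((n + 1 : ℕ) : ℝ) / 2) := Real.Gamma_pos_of_pos (by positivity)
  have := Real.rpow_pos_of_pos Real.pi_pos (((n + 1 : ℕ) : ℝ) / 2)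
  positivity

/-- the intersection probability is strictly less than 1 for any negative curvature. -/
theorem intersection_prob_lt_one (d q γ : ℕ) (hd : 2 ≤ d) (hq1 : 1 ≤ q) (hq2 : q ≤ d - 1)
    (hγ : γ ≤ q - 1) (K u : ℝ) (hK : K < 0) (hu : 0 < u) :
    Pprob d q γ K u < 1 := by
  obtain ⟨n, rfl⟩ : ∃ n, q = γ + 1 + n := ⟨q - (γ + 1), by omega⟩
  obtain ⟨p, rfl⟩ : ∃ p, d = γ + 1 + n + 1 + p := ⟨d - (γ + 1 + n + 1), by omega⟩
  have hk : 0 < Real.sqrt (-K) := Real.sqrt_pos.2 (by linarith)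
  have hkK : K = -(Real.sqrt (-K)) ^ 2 := by rw [Real.sq_sqrt (by linarith)]; ring
  have hs : 0 < Real.sinh (Real.sqrt (-K) * u) := Real.sinh_pos_iff.2 (by positivity)
  have hc := Real.cosh_pos (Real.sqrt (-K) * u)
  have hR0 : 0 < RK K u := by rw [aux_RK]; positivity
  have hR1 : Real.sqrt (-K) * RK K u < 1 := by
    rw [aux_RK, ← mul_div_assoc, mul_div_mul_left _ _ hk.ne', div_lt_one hc]
    exact Real.sinh_lt_cosh _
  have core := aux_core n γ p (-(((p + 1 + γ : ℕ) : ℝ) + n + 2) / 2) (Real.sqrt (-K)) (RK K u)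
    hk hR0 hR1
  have hG := aux_G n (p + 1 + γ) (Real.sqrt (-K)) u hk
  rw [← aux_RK] at hG
  rw [hG] at core
  have hint : ∫ r in (0:ℝ)..(1 / Real.sqrt (-K)),
      r ^ (((γ + 1 + n : ℕ) : ℝ) - (γ : ℝ) - 1) *
        ∫ z in (0:ℝ)..(min 1 (RK K u / r)),
          z ^ (γ + 1 + n) * (1 - z ^ 2) ^
            ((((γ + 1 + n + 1 + p : ℕ) : ℝ) - ((γ + 1 + n : ℕ) : ℝ)) / 2 - 1) *
            (1 + K * r ^ 2 * z ^ 2) ^ (-(((γ + 1 + n + 1 + p : ℕ) : ℝ) + 1) / 2) =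
      ∫ r in (0:ℝ)..(1 / Real.sqrt (-K)), r ^ n * ∫ z in (0:ℝ)..(min 1 (RK K u / r)),
      z ^ (γ + 1 + n) * (1 - z ^ 2) ^ (((p : ℝ) + 1) / 2 - 1) *
        (1 - Real.sqrt (-K) ^ 2 * r ^ 2 * z ^ 2) ^ (-(((p + 1 + γ : ℕ) : ℝ) + n + 2) / 2) := by
    have a1 : ((γ + 1 + n : ℕ) : ℝ) - (γ : ℝ) - 1 = (n : ℝ) := by push_cast; ring
    have a2 : (((γ + 1 + n + 1 + p : ℕ) : ℝ) - ((γ + 1 + n : ℕ) : ℝ)) / 2 - 1 =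
      ((p : ℝ) + 1) / 2 - 1 := by push_cast; ring
    have a3 : -(((γ + 1 + n + 1 + p : ℕ) : ℝ) + 1) / 2 =
      -(((p + 1 + γ : ℕ) : ℝ) + n + 2) / 2 := by push_cast; ring
    have a4 : ∀ r z : ℝ, 1 + K * r ^ 2 * z ^ 2 = 1 - Real.sqrt (-K) ^ 2 * r ^ 2 * z ^ 2 := by
      intro r z; rw [Real.sq_sqrt (by linarith)]; ring
    simp only [a1, a2, a3, a4, Real.rpow_natCast]
  unfold Pprob Dconst Cconst
  rw [hint]
  have b1 : γ + 1 + n - γ = n + 1 := by omega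
  have b2 : γ + 1 + n + 1 + p - (γ + 1 + n) = p + 1 := by omega
  have b3 : γ + 1 + n + 1 + p - γ = (n + p + 1) + 1 := by omega
  have b4 : γ + 1 + n + 1 + p - (p + 1 + γ) = n + 1 := by omega
  have b5 : -((γ + 1 + n + 1 + p : ℕ) : ℝ) + ((p + 1 + γ : ℕ) : ℝ) + 1 = -(n : ℝ) := by
    push_cast; ring
  rw [b1, b2, b3, b4, b5, Real.rpow_neg hk.le, Real.rpow_natCast, Nat.add_sub_cancel]
  have hI : 0 < ∫ r in (0:ℝ)..u, Real.cosh (Real.sqrt (-K) * r) ^ (p + 1 + γ) *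
      Real.sinh (Real.sqrt (-K) * r) ^ n := by
    apply intervalIntegral.intervalIntegral_pos_of_pos_on _ _ hu
    · exact Continuous.intervalIntegrable (by fun_prop) _ _
    · intro r hr
      have := Real.sinh_pos_iff.2 (mul_pos hk hr.1)
      have := Real.cosh_pos (Real.sqrt (-K) * r)
      positivity
  set I := ∫ r in (0:ℝ)..u, Real.cosh (Real.sqrt (-K) * r) ^ (p + 1 + γ) *
      Real.sinh (Real.sqrt (-K) * r) ^ n with hIdef
  have hom := aux_omega γ p
  have o1 := aux_omega_pos γ
  have o2 := aux_omega_pos p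
  have o3 := aux_omega_pos n
  have o4 := aux_omega_pos (p + 1 + γ)
  have o5 := aux_omega_pos (n + p + 1)
  have hkn : 0 < Real.sqrt (-K) ^ n := by positivity
  set B := ProbabilityTheory.beta (((γ : ℝ) + 1) / 2) (((p : ℝ) + 1) / 2)
  set kn := Real.sqrt (-K) ^ n
  have hpre : omegaS (γ + 1) * omegaS (n + 1) * omegaS (p + 1) /
      (omegaS (p + 1 + γ + 1) * omegaS (n + p + 1 + 1)) * omegaS (n + p + 1 + 1) /
      (omegaS (n + 1) * kn⁻¹ * I) =
      omegaS (γ + 1) * omegaS (p + 1) / omegaS (p + 1 + γ + 1) / (kn⁻¹ * I) := by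
    field_simp
  rw [hpre]
  set A := omegaS (γ + 1) * omegaS (p + 1) / omegaS (p + 1 + γ + 1) with hA
  have hApos : 0 < A := by positivity
  have hM : 0 < kn⁻¹ * I := by positivity
  calc _ < A / (kn⁻¹ * I) * (B / 2 * (kn⁻¹ * I)) := mul_lt_mul_of_pos_left core (by positivity)
    _ = A * (B / 2) := by field_simp
    _ = 1 := hom
end

section
/- Fix integers d ≥ 2, q with 1 ≤ q ≤ d-1, γ with 0 ≤ γ ≤ q-1, and a real u > 0. Then lim_{K↑0} P(d,q,γ,K,u) = 1, i.e. as the curvature K < 0 tends to 0 the intersection probability tends to 1. -/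
open Real MeasureTheory Filter Asymptotics

noncomputable def aF (p : ℕ) (β : ℝ) (z : ℝ) : ℝ := z ^ p * (1 - z ^ 2) ^ β

noncomputable def aI (p : ℕ) (β : ℝ) (t : ℝ) : ℝ := ∫ z in (0:ℝ)..t, aF p β z

lemma aF_int (p : ℕ) {β : ℝ} (hβ : -1 < β) : IntervalIntegrable (aF p β) volume 0 1 := by
  have h1 : IntervalIntegrable (fun z : ℝ => (1 - z) ^ β) volume 0 1 := by
    have := (intervalIntegral.intervalIntegrable_rpow' (a := 1) (b := 0) hβ).comp_sub_left 1
    simpa using this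
  have h2 : ContinuousOn (fun z : ℝ => z ^ p * (1 + z) ^ β) (Set.uIcc 0 1) := by
    rw [Set.uIcc_of_le zero_le_one]
    apply ContinuousOn.mul (by fun_prop)
    apply ContinuousOn.rpow_const (by fun_prop)
    intro x hx
    left
    have := hx.1
    positivity
  refine (h1.continuousOn_mul h2).congr ?_
  intro z hz
  rw [Set.uIoc_of_le zero_le_one] at hz
  simp only [aF]
  rw [show 1 - z ^ 2 = (1 + z) * (1 - z) by ring,
    Real.mul_rpow (by linarith [hz.1]) (by linarith [hz.2])]
  ring

lemma aF_int' (p : ℕ) {β : ℝ} (hβ : -1 < β) {t : ℝ} (h0 : 0 ≤ t) (h1 : t ≤ 1) :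
    IntervalIntegrable (aF p β) volume 0 t := by
  refine (aF_int p hβ).mono_set ?_
  rw [Set.uIcc_of_le h0, Set.uIcc_of_le zero_le_one]
  exact Set.Icc_subset_Icc_right h1

lemma aF_nonneg (p : ℕ) (β : ℝ) {z : ℝ} (h0 : 0 ≤ z) (h1 : z ≤ 1) : 0 ≤ aF p β z := by
  have : 0 ≤ 1 - z ^ 2 := by nlinarith
  unfold aF
  positivity

lemma aI_nonneg (p : ℕ) (β : ℝ) {z : ℝ} (h0 : 0 ≤ z) (h1 : z ≤ 1) : 0 ≤ aI p β z := by
  apply intervalIntegral.integral_nonneg h0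
  intro x hx
  exact aF_nonneg p β hx.1 (hx.2.trans h1)

lemma aI_contOn (p : ℕ) {β : ℝ} (hβ : -1 < β) : ContinuousOn (aI p β) (Set.Icc 0 1) := by
  have := intervalIntegral.continuousOn_primitive_interval' (aF_int p hβ) (a := 0) (by simp)
  rwa [Set.uIcc_of_le zero_le_one] at this

lemma aI_deriv (p : ℕ) {β : ℝ} (hβ : -1 < β) {t : ℝ} (h0 : 0 < t) (h1 : t < 1) :
    HasDerivAt (aI p β) (aF p β t) t := by
  have hc : ContinuousAt (aF p β) t := by
    unfold aF
    apply ContinuousAt.mul (by fun_prop)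
    apply ContinuousAt.rpow_const (by fun_prop)
    left
    nlinarith
  refine intervalIntegral.integral_hasDerivAt_right (aF_int' p hβ h0.le h1.le) ?_ hc
  have : StronglyMeasurable (aF p β) := by
    apply Measurable.stronglyMeasurable
    unfold aF
    fun_prop
  exact this.stronglyMeasurableAtFilter

lemma aI_one (p : ℕ) {b : ℝ} (hb : 0 < b) :
    aI p (b - 1) 1 = ProbabilityTheory.beta (((p : ℝ) + 1) / 2) b / 2 := by
  have ha : (0 : ℝ) < ((p : ℝ) + 1) / 2 := by positivity
  set a := ((p : ℝ) + 1) / 2 with hadef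
  have e1 : ProbabilityTheory.beta a b
      = ∫ x in Set.Ioo (0:ℝ) 1, x ^ (a - 1) * (1 - x) ^ (b - 1) := by
    rw [ProbabilityTheory.beta_eq_betaIntegralReal a b ha hb, Complex.betaIntegral]
    rw [← Complex.ofReal_re (∫ x in Set.Ioo (0:ℝ) 1, x ^ (a - 1) * (1 - x) ^ (b - 1))]
    congr 1
    rw [← integral_complex_ofReal, intervalIntegral.integral_of_le zero_le_one,
      integral_Ioc_eq_integral_Ioo]
    apply setIntegral_congr_fun measurableSet_Ioo
    intro x hx
    simp only
    push_cast
    rw [Complex.ofReal_cpow hx.1.le, Complex.ofReal_cpow (by linarith [hx.2])]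
    push_cast
    rfl
  have him : (fun z : ℝ => z ^ 2) '' Set.Ioo 0 1 = Set.Ioo 0 1 := by
    ext y
    constructor
    · rintro ⟨x, hx, rfl⟩
      have := hx.1
      have := hx.2
      constructor
      · simp only; positivity
      · simp only; nlinarith
    · intro hy
      refine ⟨√y, ⟨Real.sqrt_pos.2 hy.1, ?_⟩, Real.sq_sqrt hy.1.le⟩
      rw [Real.sqrt_lt' one_pos]
      simpa using hy.2
  have hinj : Set.InjOn (fun z : ℝ => z ^ 2) (Set.Ioo 0 1) := by
    intro x hx y hy h
    exact (pow_left_inj₀ hx.1.le hy.1.le two_ne_zero).1 h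
  have e2 := integral_image_eq_integral_abs_deriv_smul (s := Set.Ioo (0:ℝ) 1)
    (f := fun z : ℝ => z ^ 2) (f' := fun z => 2 * z) measurableSet_Ioo
    (fun x _ => by simpa using (hasDerivAt_pow 2 x).hasDerivWithinAt) hinj
    (fun x => x ^ (a - 1) * (1 - x) ^ (b - 1))
  rw [him] at e2
  rw [e1, e2, aI, intervalIntegral.integral_of_le zero_le_one,
      integral_Ioc_eq_integral_Ioo, ← integral_div]
  apply setIntegral_congr_fun measurableSet_Ioo
  intro x hx
  have hx0 := hx.1
  simp only [aF, smul_eq_mul]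
  rw [abs_of_pos (by positivity), ← Real.rpow_natCast x p, ← Real.rpow_natCast x 2,
    ← Real.rpow_mul hx0.le]
  have : x ^ (p : ℝ) = x * x ^ (((2 : ℕ) : ℝ) * (a - 1)) := by
    nth_rewrite 2 [← Real.rpow_one x]
    rw [← Real.rpow_add hx0]
    congr 1
    rw [hadef]; push_cast; ring
  rw [this]
  ring

lemma min_eq_aux {R r : ℝ} (hR : 0 < R) (hr : 0 < r) : min 1 (R / r) = R / max r R := by
  rcases le_total r R with h | h
  · rw [max_eq_right h, div_self hR.ne', min_eq_left]
    rwa [le_div_iff₀ hr, one_mul]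
  · rw [max_eq_left h, min_eq_right]
    rwa [div_le_one hr]

lemma J_cont (q n : ℕ) {β R : ℝ} (hβ : -1 < β) (hR : 0 < R) :
    Continuous (fun r : ℝ => r ^ n * aI q β (R / max r R)) := by
  apply Continuous.mul (by fun_prop)
  apply (aI_contOn q hβ).comp_continuous
  · apply Continuous.div (by fun_prop) (by fun_prop)
    intro x
    have := le_max_right x R
    linarith
  · intro x
    have := le_max_right x R
    constructor
    · positivity
    · rw [div_le_one (by linarith)]; exact this

lemma J_eq (γ n : ℕ) {β R T : ℝ} (hβ : -1 < β) (hR : 0 < R) (hT : R ≤ T) :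
    ∫ r in (0:ℝ)..T, r ^ n * aI (γ + (n + 1)) β (R / max r R) =
     (T ^ (n + 1) * aI (γ + (n+1)) β (R / T) - R ^ (n+1) * aI γ β (R / T)
       + R ^ (n+1) * aI γ β 1) / (n + 1) := by
  have hc := J_cont (γ + (n+1)) n hβ hR
  rw [← intervalIntegral.integral_add_adjacent_intervals (hc.intervalIntegrable 0 R)
    (hc.intervalIntegrable R T)]
  have e1 : ∫ r in (0:ℝ)..R, r ^ n * aI (γ + (n + 1)) β (R / max r R)
      = R ^ (n+1) / (n+1) * aI (γ + (n + 1)) β 1 := by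
    have : ∫ r in (0:ℝ)..R, r ^ n * aI (γ + (n + 1)) β (R / max r R)
      = ∫ r in (0:ℝ)..R, r ^ n * aI (γ + (n + 1)) β 1 := by
      apply intervalIntegral.integral_congr
      intro r hr
      rw [Set.uIcc_of_le hR.le] at hr
      simp only
      rw [max_eq_right hr.2, div_self hR.ne']
    rw [this, intervalIntegral.integral_mul_const, integral_pow]
    simp
  let H : ℝ → ℝ := fun r => (r ^ (n+1) * aI (γ + (n+1)) β (R / r)
    - R ^ (n+1) * aI γ β (R / r)) / (n + 1)
  have hn : (n : ℝ) + 1 ≠ 0 := by positivity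
  have e2 : ∫ r in R..T, r ^ n * aI (γ + (n + 1)) β (R / max r R) = H T - H R := by
    apply intervalIntegral.integral_eq_sub_of_hasDerivAt_of_le hT
    · have hd : ContinuousOn (fun r : ℝ => R / r) (Set.Icc R T) :=
        ContinuousOn.div (by fun_prop) (by fun_prop) (fun x hx => by linarith [hx.1])
      have hm : Set.MapsTo (fun r : ℝ => R / r) (Set.Icc R T) (Set.Icc 0 1) := by
        intro x hx
        have : 0 < x := by linarith [hx.1]
        exact ⟨by positivity, by simp only; rw [div_le_one this]; exact hx.1⟩
      have c1 := (aI_contOn (γ + (n+1)) hβ).comp hd hm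
      have c2 := (aI_contOn γ hβ).comp hd hm
      apply ContinuousOn.div_const
      apply ContinuousOn.sub
      · exact ContinuousOn.mul (by fun_prop) c1
      · exact ContinuousOn.mul (by fun_prop) c2
    · intro r hr
      have hr0 : 0 < r := by linarith [hr.1]
      have hz0 : 0 < R / r := by positivity
      have hz1 : R / r < 1 := by rw [div_lt_one hr0]; exact hr.1
      rw [max_eq_left hr.1.le]
      have hd : HasDerivAt (fun r : ℝ => R / r) (-R / r ^ 2) r := by
        have := (hasDerivAt_inv hr0.ne').const_mul R
        refine this.congr_deriv ?_
        ring
      have d1 := (aI_deriv (γ + (n+1)) hβ hz0 hz1).comp r hd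
      have d2 := (aI_deriv γ hβ hz0 hz1).comp r hd
      have := (((hasDerivAt_pow (n+1) r).mul d1).sub (d2.const_mul (R ^ (n+1)))).div_const
        ((n:ℝ) + 1)
      refine this.congr_deriv ?_
      have : aF (γ + (n+1)) β (R / r) = R^(n+1) / r ^ (n+1) * aF γ β (R/r) := by
        simp only [aF, pow_add, div_pow]; ring
      rw [this]
      simp only [Function.comp]
      field_simp
      push_cast
      simp
      ring
    · exact hc.intervalIntegrable R T
  rw [e1, e2]
  simp only [H]
  rw [div_self hR.ne']
  field_simp
  ring

lemma sinh_le_mul_cosh {x : ℝ} (hx : 0 ≤ x) : Real.sinh x ≤ x * Real.cosh x := by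
  have : MonotoneOn (fun x : ℝ => x * Real.cosh x - Real.sinh x) (Set.Ici 0) := by
    apply monotoneOn_of_deriv_nonneg (convex_Ici 0) (by fun_prop) (by fun_prop)
    intro y hy
    rw [interior_Ici] at hy
    have hd : HasDerivAt (fun x : ℝ => x * Real.cosh x - Real.sinh x) (y * Real.sinh y) y := by
      refine (((hasDerivAt_id y).mul (Real.hasDerivAt_cosh y)).sub
        (Real.hasDerivAt_sinh y)).congr_deriv ?_
      simp
    rw [hd.deriv]
    exact mul_nonneg (le_of_lt hy) (Real.sinh_nonneg_iff.2 (le_of_lt hy))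
  have := this (Set.mem_Ici.2 le_rfl) hx hx
  simp at this
  linarith

lemma phi_bd {k t r z ν : ℝ} (hk : 0 < k) (ht1 : t < 1) (hr : 0 < r) (hz0 : 0 ≤ z)
    (hz1 : z ≤ (t / k) / r) (hν : ν ≤ 0) :
    0 < 1 + (-k ^ 2) * r ^ 2 * z ^ 2 ∧ 1 ≤ (1 + (-k ^ 2) * r ^ 2 * z ^ 2) ^ ν ∧
      (1 + (-k ^ 2) * r ^ 2 * z ^ 2) ^ ν ≤ (1 - t ^ 2) ^ ν := by
  rw [le_div_iff₀ hr, le_div_iff₀ hk] at hz1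
  have h0 : 0 ≤ z * r * k := by positivity
  have e : 1 + (-k ^ 2) * r ^ 2 * z ^ 2 = 1 - (z * r * k) ^ 2 := by ring
  rw [e]
  have h1 : (z * r * k) ^ 2 ≤ t ^ 2 := by gcongr
  have h2 : 0 < 1 - t ^ 2 := by nlinarith
  refine ⟨by linarith, ?_, ?_⟩
  · apply Real.one_le_rpow_of_pos_of_le_one_of_nonpos (by linarith) _ hν
    nlinarith [sq_nonneg (z * r * k)]
  · exact Real.rpow_le_rpow_of_nonpos h2 (by linarith) hν

lemma inner_bd (q : ℕ) {β k t r ν : ℝ} (hβ : -1 < β) (hk : 0 < k) (ht0 : 0 < t) (ht1 : t < 1)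
    (hr : 0 < r) (hν : ν ≤ 0) :
    aI q β (min 1 ((t / k) / r)) ≤ (∫ z in (0:ℝ)..(min 1 ((t / k) / r)),
      z ^ q * (1 - z ^ 2) ^ β * (1 + (-k ^ 2) * r ^ 2 * z ^ 2) ^ ν) ∧
    (∫ z in (0:ℝ)..(min 1 ((t / k) / r)),
      z ^ q * (1 - z ^ 2) ^ β * (1 + (-k ^ 2) * r ^ 2 * z ^ 2) ^ ν) ≤
        (1 - t ^ 2) ^ ν * aI q β (min 1 ((t / k) / r)) := by
  have hm0 : 0 ≤ min 1 ((t / k) / r) := by positivity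
  have hm1 := min_le_left 1 ((t / k) / r)
  have hm2 := min_le_right 1 ((t / k) / r)
  set m := min 1 ((t / k) / r)
  have i1 := aF_int' q hβ hm0 hm1
  have i2 : IntervalIntegrable (fun z : ℝ => z ^ q * (1 - z ^ 2) ^ β *
      (1 + (-k ^ 2) * r ^ 2 * z ^ 2) ^ ν) volume 0 m := by
    refine i1.mul_continuousOn ?_
    rw [Set.uIcc_of_le hm0]
    apply ContinuousOn.rpow_const (by fun_prop)
    intro z hz
    left
    exact (phi_bd hk ht1 hr hz.1 (hz.2.trans hm2) hν).1.ne'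
  constructor
  · apply intervalIntegral.integral_mono_on hm0 i1 i2
    intro z hz
    have := aF_nonneg q β hz.1 (hz.2.trans hm1)
    exact le_mul_of_one_le_right this (phi_bd hk ht1 hr hz.1 (hz.2.trans hm2) hν).2.1
  · rw [aI, ← intervalIntegral.integral_const_mul]
    apply intervalIntegral.integral_mono_on hm0 i2 (i1.const_mul _)
    intro z hz
    have := aF_nonneg q β hz.1 (hz.2.trans hm1)
    rw [mul_comm ((1 - t ^ 2) ^ ν)]
    exact mul_le_mul_of_nonneg_left (phi_bd hk ht1 hr hz.1 (hz.2.trans hm2) hν).2.2 this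

lemma outer_bd (q n : ℕ) {β k t ν : ℝ} (hβ : -1 < β) (hk : 0 < k) (ht0 : 0 < t) (ht1 : t < 1)
    (hν : ν ≤ 0) {I : ℝ} (hI : I = ∫ r in (0:ℝ)..(1 / k), r ^ n *
      ∫ z in (0:ℝ)..(min 1 ((t / k) / r)),
      z ^ q * (1 - z ^ 2) ^ β * (1 + (-k ^ 2) * r ^ 2 * z ^ 2) ^ ν) :
    (∫ r in (0:ℝ)..(1 / k), r ^ n * aI q β ((t / k) / max r (t / k))) ≤ I ∧
    I ≤ (1 - t ^ 2) ^ ν * (∫ r in (0:ℝ)..(1 / k), r ^ n * aI q β ((t / k) / max r (t / k))) := by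
  have hR : 0 < t / k := by positivity
  have hT : 0 ≤ 1 / k := by positivity
  have hc := (J_cont q n hβ hR).intervalIntegrable (μ := volume) 0 (1 / k)
  set f : ℝ → ℝ := fun r => r ^ n * ∫ z in (0:ℝ)..(min 1 ((t / k) / r)),
      z ^ q * (1 - z ^ 2) ^ β * (1 + (-k ^ 2) * r ^ 2 * z ^ 2) ^ ν with hf
  have b1 : ∀ r : ℝ, 0 < r → r ^ n * aI q β ((t / k) / max r (t / k)) ≤ f r := by
    intro r hr
    rw [← min_eq_aux hR hr]
    exact mul_le_mul_of_nonneg_left (inner_bd q hβ hk ht0 ht1 hr hν).1 (by positivity)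
  have b2 : ∀ r : ℝ, 0 < r → f r ≤
      (1 - t ^ 2) ^ ν * (r ^ n * aI q β ((t / k) / max r (t / k))) := by
    intro r hr
    rw [← min_eq_aux hR hr, mul_left_comm]
    exact mul_le_mul_of_nonneg_left (inner_bd q hβ hk ht0 ht1 hr hν).2 (by positivity)
  have b0 : ∀ r : ℝ, 0 < r → 0 ≤ f r := by
    intro r hr
    refine le_trans ?_ (b1 r hr)
    rw [← min_eq_aux hR hr]
    have := aI_nonneg q β (z := min 1 ((t / k) / r)) (by positivity) (min_le_left _ _)
    positivity
  have hmeas : AEStronglyMeasurable f (volume.restrict (Set.Ioc 0 (1 / k))) := by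
    let S : Set (ℝ × ℝ) := {p | 0 < p.2 ∧ p.2 ≤ min 1 ((t / k) / p.1)}
    have hS : MeasurableSet S := by
      apply MeasurableSet.inter
      · exact measurableSet_lt measurable_const measurable_snd
      · exact measurableSet_le measurable_snd (by fun_prop)
    let g : ℝ × ℝ → ℝ := S.indicator (fun p => p.2 ^ q * (1 - p.2 ^ 2) ^ β *
      (1 + (-k ^ 2) * p.1 ^ 2 * p.2 ^ 2) ^ ν)
    have hg : StronglyMeasurable g := by
      apply Measurable.stronglyMeasurable
      apply Measurable.indicator _ hS
      fun_prop
    have h1 : StronglyMeasurable (fun r => r ^ n * ∫ z, g (r, z)) := by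
      apply StronglyMeasurable.mul
      · exact (by fun_prop : Measurable (fun r : ℝ => r ^ n)).stronglyMeasurable
      · exact hg.integral_prod_right'
    refine h1.aestronglyMeasurable.congr ?_
    refine (ae_restrict_iff' measurableSet_Ioc).2 (Eventually.of_forall ?_)
    intro r hr
    have hr0 := hr.1
    simp only [hf]
    congr 1
    rw [intervalIntegral.integral_of_le (by positivity), ← integral_indicator measurableSet_Ioc]
    rfl
  have hfi : IntervalIntegrable f volume 0 (1 / k) := by
    refine (hc.const_mul ((1 - t ^ 2) ^ ν)).mono_fun' ?_ ?_
    · rwa [Set.uIoc_of_le hT]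
    · rw [Set.uIoc_of_le hT]
      refine (ae_restrict_iff' measurableSet_Ioc).2 (Eventually.of_forall ?_)
      intro r hr
      beta_reduce
      rw [Real.norm_of_nonneg (b0 r hr.1)]
      exact b2 r hr.1
  rw [hI]
  constructor
  · exact intervalIntegral.integral_mono_on_of_le_Ioo hT hc hfi (fun r hr => b1 r hr.1)
  · rw [← intervalIntegral.integral_const_mul]
    exact intervalIntegral.integral_mono_on_of_le_Ioo hT hfi (hc.const_mul _)
      (fun r hr => b2 r hr.1)

lemma I_bd (γ n : ℕ) {β k t ν : ℝ} (hβ : -1 < β) (hk : 0 < k) (ht0 : 0 < t) (ht1 : t < 1)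
    (hν : ν ≤ 0) {I : ℝ} (hI : I = ∫ r in (0:ℝ)..(1 / k), r ^ n *
      ∫ z in (0:ℝ)..(min 1 ((t / k) / r)),
      z ^ (γ + (n + 1)) * (1 - z ^ 2) ^ β * (1 + (-k ^ 2) * r ^ 2 * z ^ 2) ^ ν) :
    (t / k) ^ (n + 1) * (aI γ β 1 - aI γ β t) / (n + 1) ≤ I ∧
    I ≤ (1 - t ^ 2) ^ ν * ((t / k) ^ (n + 1) * aI γ β 1 / (n + 1)) := by
  have hR : 0 < t / k := by positivity
  have := outer_bd (γ + (n+1)) n hβ hk ht0 ht1 hν hI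
  rw [J_eq γ n hβ hR (by gcongr)] at this
  rw [show t / k / (1 / k) = t by field_simp] at this
  have hW0 := aI_nonneg (γ + (n+1)) β ht0.le ht1.le
  have hW : (1 / k) ^ (n + 1) * aI (γ + (n+1)) β t ≤ (t / k) ^ (n+1) * aI γ β t := by
    rw [aI, aI, ← intervalIntegral.integral_const_mul, ← intervalIntegral.integral_const_mul]
    apply intervalIntegral.integral_mono_on ht0.le ((aF_int' _ hβ ht0.le ht1.le).const_mul _)
      ((aF_int' _ hβ ht0.le ht1.le).const_mul _)
    intro z hz
    have h := aF_nonneg γ β hz.1 (hz.2.trans ht1.le)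
    have e : (1 / k) ^ (n + 1) * aF (γ + (n+1)) β z = (z / k) ^ (n+1) * aF γ β z := by
      simp only [aF, pow_add, div_pow]; ring
    rw [e]
    have := hz.1
    have := hz.2
    gcongr
  have hc : 0 ≤ (1 - t ^ 2) ^ ν := by
    apply Real.rpow_nonneg; nlinarith
  constructor
  · refine le_trans ?_ this.1
    gcongr
    have : 0 ≤ (1 / k) ^ (n + 1) * aI (γ + (n+1)) β t := by positivity
    linarith
  · refine le_trans this.2 ?_
    gcongr
    linarith

lemma C_bd (m n : ℕ) {k u : ℝ} (hk : 0 < k) (hu : 0 < u) :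
    k ^ n * (u ^ (n + 1) / (n + 1)) ≤
      (∫ r in (0:ℝ)..u, Real.cosh (k * r) ^ m * Real.sinh (k * r) ^ n) ∧
    (∫ r in (0:ℝ)..u, Real.cosh (k * r) ^ m * Real.sinh (k * r) ^ n) ≤
      Real.cosh (k * u) ^ (m + n) * (k ^ n * (u ^ (n + 1) / (n + 1))) := by
  have e : k ^ n * (u ^ (n + 1) / (n + 1)) = ∫ r in (0:ℝ)..u, (k * r) ^ n := by
    simp [mul_pow]
  have hi : IntervalIntegrable (fun r => Real.cosh (k * r) ^ m * Real.sinh (k * r) ^ n)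
    volume 0 u := by
    apply Continuous.intervalIntegrable
    fun_prop
  have hi2 : IntervalIntegrable (fun r => (k * r) ^ n) volume 0 u := by
    apply Continuous.intervalIntegrable
    fun_prop
  rw [e]
  constructor
  · apply intervalIntegral.integral_mono_on hu.le hi2 hi
    intro r hr
    have hkr : 0 ≤ k * r := mul_nonneg hk.le hr.1
    have h1 : (k * r) ^ n ≤ Real.sinh (k * r) ^ n := by
      gcongr; exact Real.self_le_sinh_iff.2 hkr
    have h2 : 1 ≤ Real.cosh (k * r) ^ m := one_le_pow₀ (Real.one_le_cosh _)
    have h3 : 0 ≤ (k * r) ^ n := by positivity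
    nlinarith
  · rw [← intervalIntegral.integral_const_mul]
    apply intervalIntegral.integral_mono_on hu.le hi (hi2.const_mul _)
    intro r hr
    have hkr : 0 ≤ k * r := mul_nonneg hk.le hr.1
    have hch : Real.cosh (k * r) ≤ Real.cosh (k * u) := by
      rw [Real.cosh_le_cosh, abs_of_nonneg hkr, abs_of_nonneg (by positivity)]
      have := hr.2
      gcongr
    have h0 := Real.cosh_pos (k * r)
    have hs := sinh_le_mul_cosh hkr
    have hs0 : 0 ≤ Real.sinh (k * r) := Real.sinh_nonneg_iff.2 hkr
    calc Real.cosh (k * r) ^ m * Real.sinh (k * r) ^ n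
        ≤ Real.cosh (k * u) ^ m * ((k * r) * Real.cosh (k * u)) ^ n := by
          have : Real.sinh (k * r) ≤ (k * r) * Real.cosh (k * u) :=
            hs.trans (by gcongr)
          gcongr
      _ = _ := by rw [mul_pow, pow_add]; ring

lemma omegaS_pos {n : ℕ} (hn : 0 < n) : 0 < omegaS n := by
  unfold omegaS
  have : 0 < Real.Gamma ((n : ℝ) / 2) := Real.Gamma_pos_of_pos (by positivity)
  positivity

lemma omega_beta (a b : ℕ) (ha : 0 < a) (hb : 0 < b) :
    omegaS a * omegaS b / omegaS (a + b) * (ProbabilityTheory.beta ((a:ℝ) / 2) ((b : ℝ)/2) / 2)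
      = 1 := by
  unfold omegaS ProbabilityTheory.beta
  have h1 : 0 < Real.Gamma ((a : ℝ) / 2) := Real.Gamma_pos_of_pos (by positivity)
  have h2 : 0 < Real.Gamma ((b : ℝ) / 2) := Real.Gamma_pos_of_pos (by positivity)
  have h3 : 0 < Real.Gamma ((a : ℝ) / 2 + (b : ℝ) / 2) := Real.Gamma_pos_of_pos (by positivity)
  have e : ((a + b : ℕ) : ℝ) / 2 = (a : ℝ) / 2 + (b : ℝ) / 2 := by push_cast; ring
  rw [e, Real.rpow_add Real.pi_pos]
  have := Real.pi_pos
  field_simp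

lemma R_bd {k u : ℝ} (hk : 0 < k) (hu : 0 < u) :
    u / Real.cosh (k * u) ≤ Real.tanh (k * u) / k ∧ Real.tanh (k * u) / k ≤ u := by
  have hc := Real.cosh_pos (k * u)
  have h0 : 0 ≤ k * u := by positivity
  rw [Real.tanh_eq_sinh_div_cosh]
  constructor
  · rw [div_right_comm]
    gcongr
    rw [le_div_iff₀ hk, mul_comm]
    exact Real.self_le_sinh_iff.2 h0
  · rw [div_div, div_le_iff₀ (by positivity)]
    have := sinh_le_mul_cosh h0
    linarith

/-- as the curvature `K < 0` tends to `0`, the intersection probability tends to 1. -/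
theorem intersection_prob_tendsto_one_flat (d q γ : ℕ) (hd : 2 ≤ d) (hq1 : 1 ≤ q)
    (hq2 : q ≤ d - 1) (hγ : γ ≤ q - 1) (u : ℝ) (hu : 0 < u) :
    Tendsto (fun K : ℝ => Pprob d q γ K u) (nhdsWithin 0 (Set.Iio 0)) (nhds 1) := by
  obtain ⟨n, rfl⟩ : ∃ n, q = γ + (n + 1) := ⟨q - γ - 1, by omega⟩
  obtain ⟨e, rfl, he⟩ : ∃ e, d = γ + (n + 1) + e ∧ 0 < e := ⟨d - (γ + (n + 1)), by omega, by omega⟩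
  set b : ℝ := (e : ℝ) / 2 with hb
  have hb0 : 0 < b := by positivity
  have hβ : -1 < b - 1 := by linarith
  set ν : ℝ := -(((γ + (n + 1) + e : ℕ) : ℝ) + 1) / 2 with hνdef
  have hν : ν ≤ 0 := by
    rw [hνdef, neg_div]
    have : 0 ≤ (((γ + (n + 1) + e : ℕ) : ℝ) + 1) / 2 := by positivity
    linarith
  set A := aI γ (b - 1) 1 with hA
  let l := nhdsWithin (0:ℝ) (Set.Iio 0)
  let k : ℝ → ℝ := fun K => √(-K)
  have hkpos : ∀ᶠ K in l, 0 < k K := by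
    filter_upwards [self_mem_nhdsWithin] with K hK
    exact Real.sqrt_pos.2 (by simpa using hK)
  have hk0 : Tendsto k l (nhds 0) := by
    have : Continuous k := by fun_prop
    have := this.tendsto 0
    simp only [k, neg_zero, Real.sqrt_zero] at this
    exact this.mono_left nhdsWithin_le_nhds
  have hku : Tendsto (fun K => k K * u) l (nhds 0) := by simpa using hk0.mul_const u
  have hch : Tendsto (fun K => Real.cosh (k K * u)) l (nhds 1) := by
    simpa [Function.comp_def] using (Real.continuous_cosh.tendsto 0).comp hku
  have ht : Tendsto (fun K => Real.tanh (k K * u)) l (nhds 0) := by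
    have hsh : Tendsto (fun K => Real.sinh (k K * u)) l (nhds 0) := by
      simpa [Function.comp_def] using (Real.continuous_sinh.tendsto 0).comp hku
    simp only [Real.tanh_eq_sinh_div_cosh]
    simpa [Pi.div_def] using hsh.div hch one_ne_zero
  have hR : Tendsto (fun K => Real.tanh (k K * u) / k K) l (nhds u) := by
    refine tendsto_of_tendsto_of_tendsto_of_le_of_le' (g := fun K => u / Real.cosh (k K * u))
      (h := fun _ => u) ?_ tendsto_const_nhds ?_ ?_
    · simpa [Pi.div_def] using (tendsto_const_nhds (x := u)).div hch one_ne_zero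
    · filter_upwards [hkpos] with K hK using (R_bd hK hu).1
    · filter_upwards [hkpos] with K hK using (R_bd hK hu).2
  have ht01 : ∀ᶠ K in l, 0 < Real.tanh (k K * u) ∧ Real.tanh (k K * u) < 1 := by
    filter_upwards [hkpos] with K hK
    refine ⟨?_, Real.tanh_lt_one _⟩
    rw [Real.tanh_eq_sinh_div_cosh]
    have : 0 < Real.sinh (k K * u) := Real.sinh_pos_iff.2 (by positivity)
    have := Real.cosh_pos (k K * u)
    positivity
  let I : ℝ → ℝ := fun K => ∫ r in (0:ℝ)..(1 / k K), r ^ n *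
      ∫ z in (0:ℝ)..(min 1 ((Real.tanh (k K * u) / k K) / r)),
      z ^ (γ + (n + 1)) * (1 - z ^ 2) ^ (b - 1) * (1 + (-(k K) ^ 2) * r ^ 2 * z ^ 2) ^ ν
  have hI : Tendsto I l (nhds (u ^ (n + 1) * A / (n + 1))) := by
    have hAt : Tendsto (fun K => aI γ (b - 1) (Real.tanh (k K * u))) l (nhds 0) := by
      have h1 := (aI_contOn γ hβ) 0 (by simp)
      have h2 : Tendsto (fun K => Real.tanh (k K * u)) l (nhdsWithin 0 (Set.Icc 0 1)) := by
        refine tendsto_nhdsWithin_iff.2 ⟨ht, ?_⟩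
        filter_upwards [ht01] with K hK using ⟨hK.1.le, hK.2.le⟩
      have h3 := h1.tendsto.comp h2
      simpa [aI, Function.comp_def] using h3
    refine tendsto_of_tendsto_of_tendsto_of_le_of_le'
      (g := fun K => (Real.tanh (k K * u) / k K) ^ (n + 1) *
        (A - aI γ (b - 1) (Real.tanh (k K * u))) / (n + 1))
      (h := fun K => (1 - Real.tanh (k K * u) ^ 2) ^ ν *
        ((Real.tanh (k K * u) / k K) ^ (n + 1) * A / (n + 1))) ?_ ?_ ?_ ?_
    · simpa using ((hR.pow (n+1)).mul (hAt.const_sub A)).div_const ((n:ℝ) + 1)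
    · have h1 : Tendsto (fun K => 1 - Real.tanh (k K * u) ^ 2) l (nhds 1) := by
        simpa using (ht.pow 2).const_sub 1
      have h2 := h1.rpow_const (p := ν) (Or.inl one_ne_zero)
      simpa using h2.mul (((hR.pow (n+1)).mul_const A).div_const ((n:ℝ) + 1))
    · filter_upwards [hkpos, ht01] with K hK hK2
      exact (I_bd γ n hβ hK hK2.1 hK2.2 hν (I := I K) rfl).1
    · filter_upwards [hkpos, ht01] with K hK hK2
      exact (I_bd γ n hβ hK hK2.1 hK2.2 hν (I := I K) rfl).2
  let C : ℝ → ℝ := fun K => (k K ^ n)⁻¹ * ∫ r in (0:ℝ)..u,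
    Real.cosh (k K * r) ^ (e + γ) * Real.sinh (k K * r) ^ n
  have hC : Tendsto C l (nhds (u ^ (n + 1) / (n + 1))) := by
    refine tendsto_of_tendsto_of_tendsto_of_le_of_le'
      (g := fun K => u ^ (n + 1) / (n + 1))
      (h := fun K => Real.cosh (k K * u) ^ (e + γ + n) * (u ^ (n + 1) / (n + 1)))
      tendsto_const_nhds ?_ ?_ ?_
    · simpa using (hch.pow (e + γ + n)).mul_const (u ^ (n + 1) / ((n:ℝ) + 1))
    · filter_upwards [hkpos] with K hK
      simp only [C]
      rw [← div_eq_inv_mul, le_div_iff₀' (by positivity)]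
      exact (C_bd (e + γ) n hK hu).1
    · filter_upwards [hkpos] with K hK
      simp only [C]
      rw [← div_eq_inv_mul, div_le_iff₀' (by positivity), mul_left_comm]
      exact (C_bd (e + γ) n hK hu).2
  have hω1 : 0 < omegaS (n + 1) := omegaS_pos (by omega)
  have hω2 : 0 < omegaS (n + 1 + e) := omegaS_pos (by omega)
  have hD : Dconst (γ + (n + 1) + e) (γ + (n + 1)) γ * omegaS (γ + (n + 1) + e - γ)
      = omegaS (n + 1) * (omegaS (γ + 1) * omegaS e / omegaS (γ + 1 + e)) := by
    unfold Dconst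
    rw [show γ + (n + 1) + e - γ = n + 1 + e by omega, show γ + (n + 1) - γ = n + 1 by omega,
      show γ + (n + 1) + e - (γ + (n + 1)) = e by omega, show e + γ + 1 = γ + 1 + e by omega]
    field_simp
  have hfin : omegaS (γ + 1) * omegaS e / omegaS (γ + 1 + e) * A = 1 := by
    have := omega_beta (γ + 1) e (by omega) he
    rw [hA, aI_one γ hb0]
    push_cast at this
    exact this
  have hP : (fun K => omegaS (n + 1) * (omegaS (γ + 1) * omegaS e / omegaS (γ + 1 + e)) /
      (omegaS (n + 1) * C K) * I K) =ᶠ[l] fun K => Pprob (γ + (n + 1) + e) (γ + (n + 1)) γ K u := by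
    filter_upwards [hkpos, self_mem_nhdsWithin] with K hK hK0
    have hkK : -(k K) ^ 2 = K := by
      have : 0 ≤ -K := by have : K < 0 := hK0; linarith
      simp only [k]
      rw [Real.sq_sqrt this, neg_neg]
    have hRK : RK K u = Real.tanh (k K * u) / k K := by
      unfold RK
      have h1 : 1 + Real.sinh (√(-K) * u) ^ 2 = Real.cosh (√(-K) * u) ^ 2 := by
        rw [Real.cosh_sq]; ring
      rw [h1, Real.sqrt_sq (Real.cosh_pos _).le, Real.tanh_eq_sinh_div_cosh]
      rw [div_div, mul_comm √(-K) (Real.cosh _)]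
    have hCK : Cconst K (γ + (n + 1) + e) (γ + (n + 1) + e - (γ + (n + 1)) + γ) u
        = omegaS (n + 1) * C K := by
      unfold Cconst
      rw [show γ + (n + 1) + e - (γ + (n + 1)) + γ = e + γ by omega,
        show γ + (n + 1) + e - (e + γ) = n + 1 by omega, Nat.add_sub_cancel]
      rw [show -((γ + (n + 1) + e : ℕ) : ℝ) + ((e + γ : ℕ) : ℝ) + 1 = -(n : ℝ) by
        push_cast; ring, Real.rpow_neg (Real.sqrt_nonneg _), Real.rpow_natCast]
      simp only [C, k]
      ring
    unfold Pprob
    rw [hD, hCK, hRK]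
    congr 1
    simp only [I]
    rw [hkK]
    apply intervalIntegral.integral_congr
    intro r _
    simp only
    rw [show ((γ + (n + 1) : ℕ) : ℝ) - (γ : ℝ) - 1 = (n : ℝ) by push_cast; ring,
      Real.rpow_natCast]
    rw [show (((γ + (n + 1) + e : ℕ) : ℝ) - ((γ + (n + 1) : ℕ) : ℝ)) / 2 - 1 = b - 1 by
      rw [hb]; push_cast; ring]
  refine Tendsto.congr' hP ?_
  have hne : omegaS (n + 1) * (u ^ (n + 1) / ((n : ℝ) + 1)) ≠ 0 := by positivity
  have := ((tendsto_const_nhds (x := omegaS (n + 1) *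
    (omegaS (γ + 1) * omegaS e / omegaS (γ + 1 + e)))).div (hC.const_mul (omegaS (n + 1))) hne).mul hI
  have e1 : omegaS (n + 1) * (omegaS (γ + 1) * omegaS e / omegaS (γ + 1 + e)) /
      (omegaS (n + 1) * (u ^ (n + 1) / ((n:ℝ) + 1))) * (u ^ (n + 1) * A / (n + 1)) = 1 := by
    refine Eq.trans ?_ hfin
    have hn : (n : ℝ) + 1 ≠ 0 := by positivity
    have hu' := hu.ne'
    field_simp
  rw [e1] at this
  exact this
end
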